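/- arXiv:2502.00727 — 3 statements merged into one kernel-verified Lean document; each statement's English description precedes it below -/
import Mathlib

section
/- Let T = (T_1, …, T_n) be a Beurling tuple on a complex Hilbert space H, let j ∈ {1, …, n}, let P ⊆ {1, …, n} \ {j}, and let P′ = {1, …, n} \ (P ∪ {j}) = {q_1 < ⋯ < q_s}. Then the truncated defect space 𝒟_{j,T,P} equals the closed linear span of ⋃_{α ∈ ℤ_+^s} T_{P′}^α(𝒟_{j,T}), where 𝒟_{j,T,P} is the closure of the range of D²_{j,T,P} and 𝒟_{j,T} is the closure of the range of D²_{j,T}. -/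
/-!
Write `A = D²_{j,T,P}` and `F = D²_{j,T}`. Up to reordering commuting factors,
`F = ∏_{q ∈ P′} (I − Δ_{T q}) A`, and since every `T q` is of class `C_{·0}` this telescopes to the
weak identity `A = ∑_α T_{P′}^α F T_{P′}^{*α}`. If `F ≥ 0`, all the summands are positive, so
`ker A = ⋂_α ker (F T_{P′}^{*α})` (`apply_eq_zero_iff_applyDelta`); taking orthogonal complements
gives the theorem.

The content is thus the positivity of `F` (`applyDelta_defect_nonneg`), which is where the Szegő
and Beurling conditions enter. A Szegő tuple embeds isometrically in `ℓ²(ℕⁿ, H)`, the `H`-valued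
Hardy space of the polydisc, as the compression of the coordinate shifts `M k` to a co-invariant
subspace (`exists_szego_dilation`). Now let `P` denote the projection onto it, `Q = 1 − P`, and
`Y j = Q M j P`. The defect `I − T j* T j` becomes `(Y j)* (Y j)`, so the Beurling condition says
`Y i (Y j)* = 0` for `i ≠ j`, which means exactly that the restrictions `R k = M k Q` to the
invariant subspace `ran Q` doubly commute. As `T k (Y j)* = (Y j)* R k` for `k ≠ j`, one obtains
`F = (Y j)* (∏_{k ≠ j} (I − R k (R k)*)) (Y j)`, with a product of commuting projections in the
middle (`compression_defect_nonneg`).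
-/

open ContinuousLinearMap Filter Topology

variable {H : Type*} [NormedAddCommGroup H] [InnerProductSpace ℂ H] [CompleteSpace H]

/-- `T^k = T 0 ^ k 0 * T 1 ^ k 1 * ⋯` in increasing index order. -/
noncomputable def finPow {n : ℕ} (T : Fin n → H →L[ℂ] H) (k : Fin n → ℕ) : H →L[ℂ] H :=
  ((List.finRange n).map fun i => T i ^ k i).prod

/-- `𝕊ₙ⁻¹(T, T*) = ∑_{k ∈ {0,1}ⁿ} (−1)^{|k|} T^k T^{*k}`. -/
noncomputable def szegoInv {n : ℕ} (T : Fin n → H →L[ℂ] H) : H →L[ℂ] H :=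
  ∑ k : Fin n → Bool,
    ((-1 : ℂ) ^ (∑ i, if k i then 1 else 0)) •
      (finPow T (fun i => if k i then 1 else 0) *
        adjoint (finPow T (fun i => if k i then 1 else 0)))

/-- A Szegő tuple: commuting contractions, `𝕊ₙ⁻¹(T,T*) ≥ 0`, each `Tᵢ` of class `C_{·0}`. -/
structure IsSzegoTuple {n : ℕ} (T : Fin n → H →L[ℂ] H) : Prop where
  comm : ∀ i j, T i * T j = T j * T i
  contraction : ∀ i, ‖T i‖ ≤ 1
  pos : (szegoInv T).IsPositive
  pure : ∀ i (h : H), Tendsto (fun m : ℕ => (adjoint (T i) ^ m) h) atTop (𝓝 0)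

/-- A Beurling tuple: a Szegő tuple with `(I − Tᵢ*Tᵢ)(I − Tⱼ*Tⱼ) = 0` for `i ≠ j`. -/
def IsBeurlingTuple {n : ℕ} (T : Fin n → H →L[ℂ] H) : Prop :=
  IsSzegoTuple T ∧
    ∀ i j, i ≠ j → (1 - adjoint (T i) * T i) * (1 - adjoint (T j) * T j) = 0

/-- Apply `∏_{k ∈ L} (I − Δ_{T k})` to `A`, where `Δ_X(A) = X A X*`. -/
noncomputable def applyDelta {n : ℕ} (T : Fin n → H →L[ℂ] H) (L : List (Fin n))
    (A : H →L[ℂ] H) : H →L[ℂ] H :=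
  L.foldr (fun k B => B - T k * B * adjoint (T k)) A

/-- The truncated defect operator `D²_{j,T,P} = (∏_{k ∈ P} (I − Δ_{T k}))(I − Tⱼ*Tⱼ)`. -/
noncomputable def truncDefectSq {n : ℕ} (T : Fin n → H →L[ℂ] H) (j : Fin n)
    (P : Finset (Fin n)) : H →L[ℂ] H :=
  applyDelta T (P.sort (· ≤ ·)) (1 - adjoint (T j) * T j)

/-- `D²_{j,T} = D²_{j,T,P}` for `P = {1,…,n} \ {j}`. -/
noncomputable def jointDefectSq {n : ℕ} (T : Fin n → H →L[ℂ] H) (j : Fin n) : H →L[ℂ] H :=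
  truncDefectSq T j (Finset.univ.erase j)

/-- The `(i,j)`-th joint commutator `δᵢⱼ(T) = (∏_{k ∉ {i,j}} (I − Δ_{T k}))([Tⱼ, Tᵢ*])`. -/
noncomputable def jointComm {n : ℕ} (T : Fin n → H →L[ℂ] H) (i j : Fin n) : H →L[ℂ] H :=
  applyDelta T (((Finset.univ.erase i).erase j).sort (· ≤ ·))
    (T j * adjoint (T i) - adjoint (T i) * T j)

/-- Extend a multi-index supported on `P` by zero: gives `T_P^α` via `finPow`. -/
def extendSupport {n : ℕ} (P : Finset (Fin n)) (α : ↥P → ℕ) : Fin n → ℕ :=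
  fun i => if h : i ∈ P then α ⟨i, h⟩ else 0

set_option linter.unusedSectionVars false

/-! ### Compressions of doubly commuting isometries -/

@[simp] lemma applyDelta_nil {n : ℕ} (T : Fin n → H →L[ℂ] H) (A : H →L[ℂ] H) :
    applyDelta T [] A = A := rfl

lemma applyDelta_cons {n : ℕ} (T : Fin n → H →L[ℂ] H) (k : Fin n) (L : List (Fin n))
    (A : H →L[ℂ] H) :
    applyDelta T (k :: L) A = applyDelta T L A - T k * applyDelta T L A * adjoint (T k) := rfl

/-- For doubly commuting partial isometries `R k` (`k ≠ j`), the operator `∏ₖ (I − Δ_{R k})(I)` is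
the product of the commuting projections `I − R k (R k)*`. -/
lemma isStarProjection_applyDelta_one {n : ℕ} (R : Fin n → H →L[ℂ] H) (j : Fin n)
    (hp : ∀ k, k ≠ j → R k * star (R k) * R k = R k)
    (hc : ∀ k l, k ≠ j → l ≠ j → k ≠ l → R k * R l = R l * R k)
    (hd : ∀ k l, k ≠ j → l ≠ j → k ≠ l → star (R l) * R k = R k * star (R l))
    (L : List (Fin n)) (hL : L.Nodup) (hj : j ∉ L) :
    IsStarProjection (applyDelta R L 1) ∧
      ∀ k, k ≠ j → k ∉ L → Commute (applyDelta R L 1) (R k) := by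
  induction L with
  | nil => exact ⟨by simp [IsStarProjection.one], fun k _ _ => Commute.one_left _⟩
  | cons q L ih =>
    rw [List.nodup_cons] at hL
    rw [List.mem_cons, not_or] at hj
    obtain ⟨hproj, hcomm⟩ := ih hL.2 hj.2
    have hqj : q ≠ j := fun h => hj.1 h.symm
    have hq := hcomm q hqj hL.1
    have hq' : Commute (applyDelta R L 1) (star (R q)) := by
      have := hq.star_star
      rwa [hproj.isSelfAdjoint.star_eq] at this
    have hE : IsStarProjection (R q * star (R q)) :=
      ⟨by rw [IsIdempotentElem, ← mul_assoc, hp q hqj], IsSelfAdjoint.mul_star_self _⟩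
    have key : applyDelta R (q :: L) 1 = applyDelta R L 1 * (1 - R q * star (R q)) := by
      rw [applyDelta_cons, ← star_eq_adjoint, ← hq.eq, mul_sub, mul_one, mul_assoc]
    refine ⟨?_, ?_⟩
    · rw [key]
      exact hproj.mul hE.one_sub ((Commute.one_right _).sub_right (hq.mul_right hq'))
    · intro k hkj hk
      rw [List.mem_cons, not_or] at hk
      rw [key]
      refine (hcomm k hkj hk.2).mul_left ((Commute.one_left _).sub_left (Commute.mul_left ?_ ?_))
      · exact (hc k q hkj hqj hk.1).symm
      · exact hd k q hkj hqj hk.1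

/-- Positivity in the model. The `M k` are doubly commuting isometries, `P` is the projection onto
a subspace invariant under all `(M k)*`, and `P M k` are the compressions, whose defects
`P − (P M k)* (P M k)` annihilate each other. With `Q = 1 − P` and `Y = Q M j P`, the defect of
`P M j` is `Y* Y`; the restrictions `M k Q` to the invariant subspace `ran Q` still doubly
commute, and `(P M k) Y* = Y* (M k Q)` for `k ≠ j`. Hence the iterated difference applied to
`Y* Y` is `Y* E Y` with `E` a projection. -/
lemma compression_defect_nonneg {n : ℕ} (M : Fin n → H →L[ℂ] H) (P : H →L[ℂ] H)
    (hP : P * P = P) (hPs : star P = P)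
    (hinv : ∀ k, P * M k * P = P * M k)
    (hiso : ∀ k, star (M k) * M k = 1)
    (hcomm : ∀ k l, M k * M l = M l * M k)
    (hdc : ∀ k l, k ≠ l → star (M k) * M l = M l * star (M k))
    (hB : ∀ i j, i ≠ j → (P - star (P * M i) * (P * M i)) * (P - star (P * M j) * (P * M j)) = 0)
    (j : Fin n) (L : List (Fin n)) (hL : L.Nodup) (hj : j ∉ L) :
    0 ≤ applyDelta (fun k => P * M k) L (P - star (P * M j) * (P * M j)) := by
  obtain ⟨Q, hQ⟩ : ∃ Q : H →L[ℂ] H, Q = 1 - P := ⟨_, rfl⟩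
  have hPQ : P + Q = 1 := by rw [hQ]; abel
  have hQQ : Q * Q = Q := by simp [hQ, sub_mul, mul_sub, hP]
  have hQs : star Q = Q := by rw [hQ, star_sub, hPs, star_one]
  have hPMQ (k) : P * M k * Q = 0 := by rw [hQ, mul_sub, mul_one, hinv, sub_self]
  have hQMQ (k) : Q * M k * Q = M k * Q := by
    calc Q * M k * Q = (P + Q) * (M k * Q) - P * M k * Q := by noncomm_ring
      _ = M k * Q := by rw [hPMQ, hPQ]; simp
  have hQMP (k) : Q * star (M k) * P = 0 := by
    have := congrArg star (hPMQ k)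
    simpa [hPs, hQs, mul_assoc] using this
  have hQMsQ (k) : Q * star (M k) * Q = Q * star (M k) := by
    have := congrArg star (hQMQ k)
    simpa [hPs, hQs, mul_assoc] using this
  have hPMsP (k) : P * star (M k) * P = star (M k) * P := by
    have := congrArg star (hinv k)
    simpa [hPs, mul_assoc] using this
  have hD (k) : P - star (P * M k) * (P * M k) = star (Q * M k * P) * (Q * M k * P) := by
    have e1 : star (P * M k) * (P * M k) = P * star (M k) * P * M k * P := by
      calc star (P * M k) * (P * M k) = star (M k) * (P * P) * M k := by
            simp only [star_mul, hPs, mul_assoc]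
        _ = star (M k) * (P * M k * P) := by rw [hP, hinv, mul_assoc]
        _ = P * star (M k) * P * M k * P := by rw [hPMsP]; simp only [mul_assoc]
    have e2 : star (Q * M k * P) * (Q * M k * P) = P * star (M k) * (Q * Q) * M k * P := by
      simp only [star_mul, hPs, hQs, mul_assoc]
    have e3 : P = P * (star (M k) * M k) * P := by rw [hiso, mul_one, hP]
    rw [e1, e2, hQQ]
    nth_rw 1 [e3]
    have : Q = 1 - P := hQ
    rw [this]; noncomm_ring
  -- the hypothesis reads `X* X Z* Z = 0` with `X = Q M i P`, `Z = Q M k P`; the C*-identity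
  -- strips the outer factors and leaves `X Z* = 0`
  have hYY (i k) (hik : i ≠ k) : Q * M i * P * star (M k) * Q = 0 := by
    have h0 := hB i k hik
    rw [hD, hD] at h0
    set X := Q * M i * P with hX
    set Z := Q * M k * P with hZ
    have h1 : X * (star Z * Z) = 0 := by
      rw [← CStarRing.star_mul_self_eq_zero_iff]
      calc star (X * (star Z * Z)) * (X * (star Z * Z))
          = star (star Z * Z) * (star X * X * (star Z * Z)) := by simp only [star_mul, mul_assoc]
        _ = 0 := by rw [h0, mul_zero]
    have h2 : X * star Z = 0 := by
      rw [← CStarRing.mul_star_self_eq_zero_iff]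
      calc X * star Z * star (X * star Z) = X * (star Z * Z) * star X := by
            simp only [star_mul, star_star, mul_assoc]
        _ = 0 := by rw [h1, zero_mul]
    calc Q * M i * P * star (M k) * Q = Q * M i * (P * P) * star (M k) * Q := by rw [hP]
      _ = X * star Z := by rw [hX, hZ]; simp only [star_mul, hPs, hQs, mul_assoc]
      _ = 0 := h2
  -- the intertwining `(P M q) Y* = Y* (M q Q)` moves the iterated difference inside `Y* · Y`
  have hconj : applyDelta (fun k => P * M k) L (P - star (P * M j) * (P * M j)) =
      star (Q * M j * P) * applyDelta (fun k => M k * Q) L 1 * (Q * M j * P) := by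
    rw [hD]
    clear hL
    induction L with
    | nil => simp
    | cons q L ih =>
      rw [List.mem_cons, not_or] at hj
      have hTY : P * M q * star (Q * M j * P) = star (Q * M j * P) * (M q * Q) := by
        have a1 : P * M q * star (Q * M j * P) = P * M q * P * star (M j) * Q := by
          simp only [star_mul, hPs, hQs, mul_assoc]
        have a2 : star (Q * M j * P) * (M q * Q) = P * star (M j) * (Q * M q * Q) := by
          simp only [star_mul, hPs, hQs, mul_assoc]
        rw [a1, a2, hinv, hQMQ, mul_assoc P, ← hdc j q hj.1]
        simp only [mul_assoc]
      have hTY' : Q * M j * P * star (P * M q) = star (M q * Q) * (Q * M j * P) := by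
        have := congrArg star hTY
        simpa [mul_assoc] using this
      rw [applyDelta_cons, applyDelta_cons, ih hj.2, ← star_eq_adjoint, ← star_eq_adjoint]
      set B := applyDelta (fun k => M k * Q) L 1
      calc _ = star (Q * M j * P) * B * (Q * M j * P) -
            (P * M q * star (Q * M j * P)) * B * (Q * M j * P * star (P * M q)) := by
              simp only [mul_assoc]
        _ = _ := by rw [hTY, hTY']; noncomm_ring
  have hproj := (isStarProjection_applyDelta_one (fun k => M k * Q) j ?_ ?_ ?_ L hL hj).1
  · rw [hconj]
    exact star_left_conjugate_nonneg hproj.nonneg _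
  · intro k _
    calc M k * Q * star (M k * Q) * (M k * Q) = M k * (Q * Q) * (star (M k) * M k) * Q := by
          simp only [star_mul, hQs, mul_assoc]
      _ = M k * Q := by rw [hiso, hQQ, mul_one, mul_assoc, hQQ]
  · intro k l _ _ _
    calc M k * Q * (M l * Q) = M k * (Q * M l * Q) := by simp only [mul_assoc]
      _ = M l * (Q * M k * Q) := by
        rw [hQMQ, hQMQ, ← mul_assoc, hcomm, mul_assoc]
      _ = _ := by simp only [mul_assoc]
  -- double commutation of the restrictions: the discrepancy is exactly the term killed by `hYY`
  · intro k l _ _ hkl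
    calc star (M l * Q) * (M k * Q) = Q * (star (M l) * M k) * Q := by
          simp only [star_mul, hQs, mul_assoc]
      _ = Q * M k * (P + Q) * star (M l) * Q := by
          rw [hdc l k (Ne.symm hkl), hPQ]; simp only [mul_assoc, one_mul]
      _ = Q * M k * P * star (M l) * Q + Q * M k * Q * star (M l) * Q := by noncomm_ring
      _ = M k * (Q * star (M l) * Q) := by
          rw [hYY k l hkl, hQMQ, zero_add]; simp only [mul_assoc]
      _ = M k * (Q * Q) * star (M l) := by rw [hQMsQ, hQQ, mul_assoc]
      _ = M k * Q * star (M l * Q) := by simp only [star_mul, hQs, mul_assoc]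

/-! ### The coordinate shifts on `ℓ²(ℕⁿ, H)` -/

lemma memℓp_two_of_summable {ι : Type*} {f : ι → H} (hf : Summable fun i => ‖f i‖ ^ 2) :
    Memℓp f 2 := by
  refine memℓp_gen ?_
  simpa using hf

lemma lp_two_hasSum_norm_sq {ι : Type*} (f : lp (fun _ : ι => H) 2) :
    HasSum (fun i => ‖f i‖ ^ 2) (‖f‖ ^ 2) := by
  have := lp.hasSum_norm (p := 2) (by norm_num) f
  simpa using this

lemma hasSum_norm_sq_extend {ι : Type*} {σ : ι → ι} (hσ : Function.Injective σ)
    (f : lp (fun _ : ι => H) 2) :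
    HasSum (fun i => ‖Function.extend σ f 0 i‖ ^ 2) (‖f‖ ^ 2) := by
  rw [← hσ.hasSum_iff]
  · have := lp_two_hasSum_norm_sq f
    simpa [Function.comp_def, hσ.extend_apply] using this
  · intro x hx
    rw [Function.extend_apply' _ _ _ (by simpa using hx)]
    simp

/-- The isometry of `ℓ²(ι, H)` that pushes a family forward along an injection `σ : ι → ι`,
extending it by zero off the range of `σ`. -/
noncomputable def pushShift {ι : Type*} (σ : ι → ι) (hσ : Function.Injective σ) :
    lp (fun _ : ι => H) 2 →ₗᵢ[ℂ] lp (fun _ : ι => H) 2 where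
  toFun f := ⟨Function.extend σ f 0, memℓp_two_of_summable (hasSum_norm_sq_extend hσ f).summable⟩
  map_add' f g := by
    ext i
    by_cases h : ∃ a, σ a = i
    · obtain ⟨a, rfl⟩ := h
      exact (hσ.extend_apply _ _ _).trans
        (congrArg₂ (· + ·) (hσ.extend_apply f 0 a) (hσ.extend_apply g 0 a)).symm
    · have e (u : ι → H) : Function.extend σ u 0 i = 0 := Function.extend_apply' _ _ _ h
      exact (e _).trans ((congrArg₂ (· + ·) (e f) (e g)).trans (add_zero 0)).symm
  map_smul' c f := by
    ext i
    by_cases h : ∃ a, σ a = i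
    · obtain ⟨a, rfl⟩ := h
      simp [hσ.extend_apply]
    · simp [Function.extend_apply' _ _ _ h]
  norm_map' f := by
    have h := (lp_two_hasSum_norm_sq (H := H) (⟨Function.extend σ f 0,
      memℓp_two_of_summable (hasSum_norm_sq_extend hσ f).summable⟩ :
        lp (fun _ : ι => H) 2)).unique (hasSum_norm_sq_extend hσ f)
    exact (sq_eq_sq₀ (norm_nonneg _) (norm_nonneg _)).1 h

lemma pushShift_apply {ι : Type*} (σ : ι → ι) (hσ : Function.Injective σ)
    (f : lp (fun _ : ι => H) 2) (i : ι) :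
    (pushShift σ hσ f : lp (fun _ : ι => H) 2) i = Function.extend σ f 0 i := rfl

/-- The adjoint of a push-forward isometry is composition with the index map. -/
lemma adjoint_pushShift_apply {ι : Type*} (σ : ι → ι) (hσ : Function.Injective σ)
    (f : lp (fun _ : ι => H) 2) (i : ι) :
    (adjoint (pushShift (H := H) σ hσ).toContinuousLinearMap f) i = f (σ i) := by
  classical
  refine ext_inner_left ℂ fun x => ?_
  have hsingle : pushShift σ hσ (lp.single 2 i x : lp (fun _ : ι => H) 2) =
      lp.single 2 (σ i) x := by
    ext k
    rw [pushShift_apply]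
    by_cases h : ∃ a, σ a = k
    · obtain ⟨a, rfl⟩ := h
      refine (hσ.extend_apply _ _ _).trans ?_
      simp [Pi.single_apply, hσ.eq_iff]
    · refine (Function.extend_apply' _ _ _ h).trans ?_
      have : k ≠ σ i := fun e => h ⟨i, e.symm⟩
      simp [this]
  refine (lp.inner_single_left (𝕜 := ℂ) (G := fun _ : ι => H) i x _).symm.trans
    (Eq.trans ?_ (lp.inner_single_left (𝕜 := ℂ) (G := fun _ : ι => H) (σ i) x f))
  rw [adjoint_inner_right, LinearIsometry.coe_toContinuousLinearMap, hsingle]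

/-- Multiplication by the `i`-th coordinate on the `H`-valued Hardy space of the polydisc, in
coefficient form: the `i`-th unilateral shift on `ℓ²(ℕⁿ, H)`. -/
noncomputable def coordShift (H : Type*) [NormedAddCommGroup H] [InnerProductSpace ℂ H]
    [CompleteSpace H] {n : ℕ} (i : Fin n) :
    lp (fun _ : Fin n → ℕ => H) 2 →L[ℂ] lp (fun _ : Fin n → ℕ => H) 2 :=
  (pushShift (fun α : Fin n → ℕ => α + Pi.single i 1)
    (add_left_injective _)).toContinuousLinearMap

lemma star_coordShift_apply {n : ℕ} (i : Fin n) (f : lp (fun _ : Fin n → ℕ => H) 2)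
    (α : Fin n → ℕ) : (star (coordShift H i) f) α = f (α + Pi.single i 1) :=
  adjoint_pushShift_apply _ _ f α

lemma star_coordShift_mul_self {n : ℕ} (i : Fin n) :
    star (coordShift H i) * coordShift H i = 1 :=
  (ContinuousLinearMap.norm_map_iff_adjoint_comp_self _).1 (LinearIsometry.norm_map _)

lemma coordShift_comm {n : ℕ} (i j : Fin n) :
    coordShift H i * coordShift H j = coordShift H j * coordShift H i := by
  have h : star (coordShift H j) * star (coordShift H i) =
      star (coordShift H i) * star (coordShift H j) := by
    ext f α
    simp only [mul_apply_eq_comp, star_coordShift_apply, add_right_comm]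
  simpa using congrArg star h

lemma star_coordShift_comm {n : ℕ} (i j : Fin n) (hij : i ≠ j) :
    star (coordShift H i) * coordShift H j = coordShift H j * star (coordShift H i) := by
  ext f α
  have hinj : Function.Injective (fun α : Fin n → ℕ => α + Pi.single j 1) := add_left_injective _
  simp only [mul_apply_eq_comp, star_coordShift_apply]
  change Function.extend (fun α : Fin n → ℕ => α + Pi.single j 1) f 0 (α + Pi.single i 1) =
    Function.extend (fun α : Fin n → ℕ => α + Pi.single j 1) (star (coordShift H i) f) 0 α
  by_cases h : ∃ β : Fin n → ℕ, β + Pi.single j 1 = α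
  · obtain ⟨β, rfl⟩ := h
    rw [add_right_comm]
    exact (hinj.extend_apply f 0 (β + Pi.single i 1)).trans
      ((hinj.extend_apply (star (coordShift H i) f) 0 β).trans (star_coordShift_apply i f β)).symm
  · refine (Function.extend_apply' (⇑f) (0 : (Fin n → ℕ) → H) _ ?_).trans
      (Function.extend_apply' (⇑(star (coordShift H i) f))
        (0 : (Fin n → ℕ) → H) _ h).symm
    · rintro ⟨β, hβ⟩
      refine h ⟨β - Pi.single i 1, ?_⟩
      funext k
      have := congrFun hβ k
      simp only [Pi.add_apply, Pi.sub_apply, Pi.single_apply] at this ⊢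
      split_ifs at this ⊢ <;> simp_all

/-! ### Monomials, iterated differences and telescoping -/

lemma finPow_succ {n : ℕ} (T : Fin (n + 1) → H →L[ℂ] H) (α : Fin (n + 1) → ℕ) :
    finPow T α = T 0 ^ α 0 * finPow (fun i => T i.succ) (fun i => α i.succ) := by
  simp [finPow, List.finRange_succ, Function.comp_def]

lemma finPow_dim_zero (T : Fin 0 → H →L[ℂ] H) (α : Fin 0 → ℕ) : finPow T α = 1 := by
  simp [finPow]

lemma commute_finPow {n : ℕ} (T : Fin n → H →L[ℂ] H) (X : H →L[ℂ] H) (α : Fin n → ℕ)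
    (hX : ∀ i, Commute X (T i)) : Commute X (finPow T α) := by
  refine Commute.list_prod_right _ _ fun Y hY => ?_
  obtain ⟨i, -, rfl⟩ := List.mem_map.1 hY
  exact (hX i).pow_right _

lemma finPow_add {n : ℕ} (T : Fin n → H →L[ℂ] H) (hc : ∀ i j, T i * T j = T j * T i)
    (α β : Fin n → ℕ) : finPow T (α + β) = finPow T α * finPow T β := by
  induction n with
  | zero => simp [finPow_dim_zero]
  | succ n ih =>
    have h1 : Commute (T 0 ^ β 0) (finPow (fun i => T i.succ) (fun i => α i.succ)) :=
      commute_finPow _ _ _ fun i => Commute.pow_left (hc 0 i.succ) _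
    have h2 := ih (fun i => T i.succ) (fun i j => hc _ _) (fun i => α i.succ) (fun i => β i.succ)
    calc finPow T (α + β) = T 0 ^ (α 0 + β 0) *
          finPow (fun i => T i.succ) ((fun i => α i.succ) + (fun i => β i.succ)) := finPow_succ _ _
      _ = T 0 ^ α 0 * (T 0 ^ β 0 * finPow (fun i => T i.succ) (fun i => α i.succ)) *
          finPow (fun i => T i.succ) (fun i => β i.succ) := by
        rw [h2, pow_add]; simp only [mul_assoc]
      _ = finPow T α * finPow T β := by
        rw [h1.eq, finPow_succ T α, finPow_succ T β]; simp only [mul_assoc]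

lemma finPow_zero {n : ℕ} (T : Fin n → H →L[ℂ] H) : finPow T 0 = 1 := by
  simp [finPow]

lemma finPow_single {n : ℕ} (T : Fin n → H →L[ℂ] H) (i : Fin n) (m : ℕ) :
    finPow T (Pi.single i m) = T i ^ m := by
  induction n with
  | zero => exact i.elim0
  | succ n ih =>
    rw [finPow_succ]
    refine Fin.cases ?_ (fun k => ?_) i
    · have : (fun k : Fin n => (Pi.single 0 m : Fin (n + 1) → ℕ) k.succ) = 0 := by
        funext k; simp
      rw [this, finPow_zero]; simp
    · have : (fun l : Fin n => (Pi.single k.succ m : Fin (n + 1) → ℕ) l.succ) =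
          Pi.single k m := by
        funext l; simp [Pi.single_apply]
      rw [this, ih (fun i => T i.succ) k]
      simp [(Fin.succ_ne_zero k).symm]

lemma applyDelta_map {n m : ℕ} (T : Fin n → H →L[ℂ] H) (f : Fin m → Fin n) (L : List (Fin m))
    (A : H →L[ℂ] H) : applyDelta T (L.map f) A = applyDelta (fun i => T (f i)) L A := by
  simp [applyDelta, List.foldr_map]

lemma applyDelta_finRange_succ {n : ℕ} (T : Fin (n + 1) → H →L[ℂ] H) (A : H →L[ℂ] H) :
    applyDelta T (List.finRange (n + 1)) A =
      applyDelta (fun i => T i.succ) (List.finRange n) A -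
        T 0 * applyDelta (fun i => T i.succ) (List.finRange n) A * adjoint (T 0) := by
  rw [List.finRange_succ, applyDelta_cons, applyDelta_map]

/-- The alternating sum defining the Szegő inverse is the iterated difference
`∏ₖ (I − Δ_{T k})` applied to the identity. -/
lemma szegoInv_eq_applyDelta {n : ℕ} (T : Fin n → H →L[ℂ] H) :
    szegoInv T = applyDelta T (List.finRange n) 1 := by
  induction n with
  | zero => simp [szegoInv, finPow_dim_zero, ← star_eq_adjoint]
  | succ n ih =>
    rw [applyDelta_finRange_succ, ← ih]
    unfold szegoInv
    rw [← (Fin.consEquiv (fun _ : Fin (n + 1) => Bool)).sum_comp, Fintype.sum_prod_type,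
      Fintype.sum_bool, add_comm, sub_eq_add_neg]
    congr 1
    · refine Finset.sum_congr rfl fun k _ => ?_
      simp [Fin.consEquiv, Fin.sum_univ_succ, finPow_succ]
    · rw [Finset.mul_sum, Finset.sum_mul, ← Finset.sum_neg_distrib]
      refine Finset.sum_congr rfl fun k _ => ?_
      simp [Fin.consEquiv, Fin.sum_univ_succ, finPow_succ, ← star_eq_adjoint, pow_add, mul_assoc]

lemma isSelfAdjoint_applyDelta {n : ℕ} (T : Fin n → H →L[ℂ] H) (L : List (Fin n))
    {A : H →L[ℂ] H} (hA : IsSelfAdjoint A) : IsSelfAdjoint (applyDelta T L A) := by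
  induction L with
  | nil => exact hA
  | cons q L ih =>
    rw [applyDelta_cons, ← star_eq_adjoint]
    exact ih.sub (ih.conjugate _)

lemma applyDelta_perm {n : ℕ} (T : Fin n → H →L[ℂ] H) (hc : ∀ i j, T i * T j = T j * T i)
    {L₁ L₂ : List (Fin n)} (h : L₁.Perm L₂) (A : H →L[ℂ] H) :
    applyDelta T L₁ A = applyDelta T L₂ A := by
  refine h.foldr_eq' ?_ A
  intro x _ y _ B
  have hs : adjoint (T x) * adjoint (T y) = adjoint (T y) * adjoint (T x) := by
    have := congrArg star (hc y x)
    rwa [star_mul, star_mul, star_eq_adjoint, star_eq_adjoint] at this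
  have h1 : T y * (T x * B * adjoint (T x)) * adjoint (T y) =
      T x * (T y * B * adjoint (T y)) * adjoint (T x) := by
    calc _ = (T y * T x) * B * (adjoint (T x) * adjoint (T y)) := by simp only [mul_assoc]
      _ = _ := by rw [hs, hc y x]; simp only [mul_assoc]
  simp only [mul_sub, sub_mul, h1]
  abel

lemma reApplyInnerSelf_conj (X A : H →L[ℂ] H) (h : H) :
    (X * A * adjoint X).reApplyInnerSelf h = A.reApplyInnerSelf (adjoint X h) := by
  rw [reApplyInnerSelf_apply, reApplyInnerSelf_apply, mul_apply_eq_comp, mul_apply_eq_comp,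
    ← adjoint_inner_right]

lemma reApplyInnerSelf_sub (A B : H →L[ℂ] H) (h : H) :
    (A - B).reApplyInnerSelf h = A.reApplyInnerSelf h - B.reApplyInnerSelf h := by
  simp [reApplyInnerSelf_apply, inner_sub_left]

lemma reApplyInnerSelf_nonneg {A : H →L[ℂ] H} (hA : 0 ≤ A) (h : H) : 0 ≤ A.reApplyInnerSelf h :=
  ((nonneg_iff_isPositive A).1 hA).re_inner_nonneg_left h

lemma reApplyInnerSelf_star_mul (C : H →L[ℂ] H) (h : H) :
    (star C * C).reApplyInnerSelf h = ‖C h‖ ^ 2 := by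
  rw [reApplyInnerSelf_apply, mul_apply_eq_comp, star_eq_adjoint, adjoint_inner_left,
    inner_self_eq_norm_sq]

lemma apply_eq_zero_iff_reApplyInnerSelf {A : H →L[ℂ] H} (hA : 0 ≤ A) (h : H) :
    A h = 0 ↔ A.reApplyInnerSelf h = 0 := by
  obtain ⟨C, rfl⟩ := CStarAlgebra.nonneg_iff_eq_star_mul_self.1 hA
  constructor
  · intro h0
    rw [reApplyInnerSelf_apply, h0, inner_zero_left, map_zero]
  · intro h0
    rw [reApplyInnerSelf_star_mul, sq_eq_zero_iff, norm_eq_zero] at h0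
    rw [mul_apply_eq_comp, h0, map_zero]

/-- Telescoping along one pure contraction: if `G − T G T* ≥ 0` and `T*ᵐ → 0` strongly, then
`G = ∑ₘ Tᵐ (G − T G T*) T*ᵐ` in the weak sense, so `G` is positive too. -/
lemma telescope_pure (T : H →L[ℂ] H)
    (hT : ∀ h, Tendsto (fun m : ℕ => (adjoint T ^ m) h) atTop (𝓝 0))
    {G : H →L[ℂ] H} (hG : IsSelfAdjoint G) (hF : 0 ≤ G - T * G * adjoint T) :
    0 ≤ G ∧ ∀ h, HasSum (fun m : ℕ =>
      (G - T * G * adjoint T).reApplyInnerSelf ((adjoint T ^ m) h)) (G.reApplyInnerSelf h) := by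
  have hs (h : H) : HasSum (fun m : ℕ =>
      (G - T * G * adjoint T).reApplyInnerSelf ((adjoint T ^ m) h)) (G.reApplyInnerSelf h) := by
    rw [hasSum_iff_tendsto_nat_of_nonneg fun m => reApplyInnerSelf_nonneg hF _]
    have hsum (N : ℕ) : ∑ m ∈ Finset.range N,
        (G - T * G * adjoint T).reApplyInnerSelf ((adjoint T ^ m) h) =
          G.reApplyInnerSelf h - G.reApplyInnerSelf ((adjoint T ^ N) h) := by
      induction N with
      | zero => simp
      | succ N ih =>
        rw [Finset.sum_range_succ, ih, reApplyInnerSelf_sub, reApplyInnerSelf_conj, pow_succ' _ N,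
          mul_apply_eq_comp]
        ring
    simp only [hsum]
    have hlim := (G.reApplyInnerSelf_continuous.tendsto 0).comp (hT h)
    have h0 : G.reApplyInnerSelf 0 = 0 := by simp [reApplyInnerSelf_apply]
    rw [h0] at hlim
    simpa using hlim.const_sub (G.reApplyInnerSelf h)
  refine ⟨?_, hs⟩
  rw [nonneg_iff_isPositive, isPositive_def']
  exact ⟨hG, fun h => (hs h).nonneg fun m => reApplyInnerSelf_nonneg hF _⟩

/-- For nonnegative families, iterated sums give an unconditional sum over the product. -/
lemma hasSum_prod_of_nonneg {σ τ : Type*} {f : σ × τ → ℝ} {g : τ → ℝ} {a : ℝ}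
    (hf : ∀ p, 0 ≤ f p) (h1 : ∀ t, HasSum (fun s => f (s, t)) (g t)) (h2 : HasSum g a) :
    HasSum f a := by
  have hs : Summable (fun p : τ × σ => f p.swap) := by
    rw [summable_prod_of_nonneg fun p => hf _]
    refine ⟨fun t => (h1 t).summable, ?_⟩
    have : (fun t => ∑' s, f (s, t)) = g := funext fun t => (h1 t).tsum_eq
    exact this ▸ h2.summable
  have h3 := hs.hasSum.prod_fiberwise (fun t => h1 t)
  have h4 := h3.unique h2 ▸ hs.hasSum
  exact (Equiv.prodComm τ σ).hasSum_iff.1 h4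

/-- Multivariable telescoping: `A = ∑_α T^α ((∏ₖ (I − Δ_{T k})) A) T*^α` in the weak sense. -/
lemma hasSum_applyDelta {n : ℕ} (T : Fin n → H →L[ℂ] H) (hc : ∀ i j, T i * T j = T j * T i)
    (hp : ∀ i (h : H), Tendsto (fun m : ℕ => (adjoint (T i) ^ m) h) atTop (𝓝 0))
    {A : H →L[ℂ] H} (hA : IsSelfAdjoint A) (h0 : 0 ≤ applyDelta T (List.finRange n) A) (h : H) :
    HasSum (fun α : Fin n → ℕ =>
      (applyDelta T (List.finRange n) A).reApplyInnerSelf (adjoint (finPow T α) h))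
      (A.reApplyInnerSelf h) := by
  induction n with
  | zero =>
    simp [finPow_dim_zero, ← star_eq_adjoint]
  | succ n ih =>
    have hnn := h0
    rw [applyDelta_finRange_succ] at h0
    obtain ⟨hB, hsum⟩ := telescope_pure (T 0) (hp 0)
      (isSelfAdjoint_applyDelta (fun i => T i.succ) (List.finRange n) hA) h0
    have h2 := ih (fun i => T i.succ) (fun i j => hc _ _) (fun i => hp _) hB
    rw [← (Fin.consEquiv (fun _ : Fin (n + 1) => ℕ)).hasSum_iff]
    refine hasSum_prod_of_nonneg (fun p => reApplyInnerSelf_nonneg hnn _) (fun β => ?_) h2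
    have h1 := hsum (adjoint (finPow (fun i => T i.succ) β) h)
    rw [← applyDelta_finRange_succ] at h1
    convert h1 using 3 with m
    have hcm : Commute (T 0 ^ m) (finPow (fun i => T i.succ) β) :=
      commute_finPow _ _ _ fun i => Commute.pow_left (hc 0 i.succ) _
    have : finPow T (Fin.consEquiv (fun _ : Fin (n + 1) => ℕ) (m, β)) =
        finPow (fun i => T i.succ) β * T 0 ^ m := by
      rw [finPow_succ, ← hcm.eq]; simp [Fin.consEquiv]
    simp [this, ← star_eq_adjoint]

/-- Kernel form of the telescoping along a list of variables `L`: if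
`F = ∏_{k ∈ L} (I − Δ_{T k}) A` is positive, then `A` is a weak sum of the positive operators
`T^α F T*^α` with `α` supported in `L`, so its kernel is the intersection of theirs. -/
lemma apply_eq_zero_iff_applyDelta {n : ℕ} (T : Fin n → H →L[ℂ] H)
    (hc : ∀ i j, T i * T j = T j * T i)
    (hp : ∀ i (h : H), Tendsto (fun m : ℕ => (adjoint (T i) ^ m) h) atTop (𝓝 0))
    {A : H →L[ℂ] H} (hA : IsSelfAdjoint A) (L : List (Fin n)) (h0 : 0 ≤ applyDelta T L A)
    (h : H) :
    A h = 0 ↔ ∀ α : Fin n → ℕ, (∀ i, i ∉ L → α i = 0) →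
      applyDelta T L A (adjoint (finPow T α) h) = 0 := by
  induction L with
  | nil =>
    constructor
    · intro hh α hα
      have : α = 0 := funext fun i => hα i (by simp)
      rw [this, finPow_zero]
      simpa [← star_eq_adjoint] using hh
    · intro hh
      have := hh 0 (fun _ _ => rfl)
      rw [finPow_zero] at this
      simpa [← star_eq_adjoint] using this
  | cons q L ih =>
    have hF := h0
    rw [applyDelta_cons] at hF
    obtain ⟨hG, hsum⟩ := telescope_pure (T q) (hp q) (isSelfAdjoint_applyDelta T L hA) hF
    rw [← applyDelta_cons] at hsum
    have hadj (α : Fin n → ℕ) (m : ℕ) : adjoint (finPow T (α + Pi.single q m)) h =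
        (adjoint (T q) ^ m) (adjoint (finPow T α) h) := by
      rw [finPow_add T hc, finPow_single]; simp [← star_eq_adjoint]
    -- the kernel of a sum of positive operators is the intersection of the kernels
    have hker (g : H) : applyDelta T L A g = 0 ↔
        ∀ m : ℕ, applyDelta T (q :: L) A ((adjoint (T q) ^ m) g) = 0 := by
      rw [apply_eq_zero_iff_reApplyInnerSelf hG]
      simp only [apply_eq_zero_iff_reApplyInnerSelf h0]
      have hs := hsum g
      constructor
      · intro hg
        rw [hg, hasSum_zero_iff_of_nonneg fun m => reApplyInnerSelf_nonneg h0 _] at hs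
        exact fun m => congrFun hs m
      · intro hg
        simp only [hg] at hs
        exact hs.unique hasSum_zero
    rw [ih hG]
    constructor
    · intro hh β hβ
      have hdec : β = Function.update β q 0 + Pi.single q (β q) := by
        funext i
        by_cases hi : i = q
        · subst hi; simp
        · simp [hi]
      rw [hdec, hadj]
      refine (hker _).1 (hh _ fun i hi => ?_) _
      by_cases hiq : i = q
      · subst hiq; simp
      · rw [Function.update_of_ne hiq]
        exact hβ i (by simp [hiq, hi])
    · intro hh α hα
      rw [hker]
      intro m
      rw [← hadj]
      refine hh _ fun i hi => ?_
      rw [List.mem_cons, not_or] at hi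
      simp [hi.1, hα i hi.2]

/-! ### Dilation and positivity of the defect operators -/

lemma applyDelta_append {n : ℕ} (T : Fin n → H →L[ℂ] H) (L₁ L₂ : List (Fin n)) (A : H →L[ℂ] H) :
    applyDelta T (L₁ ++ L₂) A = applyDelta T L₁ (applyDelta T L₂ A) :=
  List.foldr_append

/-- A Szegő tuple is the compression of the coordinate shifts to a co-invariant subspace. With
`C* C = 𝕊ₙ⁻¹(T, T*)` the embedding is `h ↦ (C T*^α h)_α`; it is isometric because
`∑_α T^α 𝕊ₙ⁻¹(T, T*) T*^α = I`. -/
lemma exists_szego_dilation {n : ℕ} (T : Fin n → H →L[ℂ] H) (hT : IsSzegoTuple T) :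
    ∃ W : H →ₗᵢ[ℂ] lp (fun _ : Fin n → ℕ => H) 2,
      ∀ i h, W (adjoint (T i) h) = star (coordShift H i) (W h) := by
  have hS : 0 ≤ applyDelta T (List.finRange n) 1 := by
    rw [← szegoInv_eq_applyDelta, nonneg_iff_isPositive]
    exact hT.pos
  obtain ⟨C, hC⟩ := CStarAlgebra.nonneg_iff_eq_star_mul_self.1 hS
  have hsum (h : H) :
      HasSum (fun α : Fin n → ℕ => ‖C (adjoint (finPow T α) h)‖ ^ 2) (‖h‖ ^ 2) := by
    have := hasSum_applyDelta T hT.comm hT.pure (IsSelfAdjoint.one _) hS h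
    have h1 : (1 : H →L[ℂ] H).reApplyInnerSelf h = ‖h‖ ^ 2 := by
      rw [reApplyInnerSelf_apply, one_apply_eq_self, inner_self_eq_norm_sq]
    rw [h1] at this
    simpa only [hC, reApplyInnerSelf_star_mul] using this
  let W : H →ₗᵢ[ℂ] lp (fun _ : Fin n → ℕ => H) 2 :=
    { toFun := fun h => ⟨fun α => C (adjoint (finPow T α) h),
        memℓp_two_of_summable (hsum h).summable⟩
      map_add' := fun x y => by
        ext α
        exact (congrArg C (map_add _ x y)).trans (map_add C _ _)
      map_smul' := fun c x => by
        ext α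
        exact (congrArg C (map_smul _ c x)).trans (map_smul C _ _)
      norm_map' := fun h => by
        have h1 := (lp_two_hasSum_norm_sq (H := H) (⟨fun α => C (adjoint (finPow T α) h),
          memℓp_two_of_summable (hsum h).summable⟩ :
            lp (fun _ : Fin n → ℕ => H) 2)).unique (hsum h)
        exact (sq_eq_sq₀ (norm_nonneg _) (norm_nonneg _)).1 h1 }
  refine ⟨W, fun i h => ?_⟩
  ext α
  rw [star_coordShift_apply]
  change C (adjoint (finPow T α) (adjoint (T i) h)) = C (adjoint (finPow T (α + Pi.single i 1)) h)
  have hcm : Commute (T i) (finPow T α) := commute_finPow _ _ _ fun k => hT.comm i k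
  rw [finPow_add T hT.comm, finPow_single, pow_one, ← hcm.eq, ← star_eq_adjoint, ← star_eq_adjoint,
    ← star_eq_adjoint, star_mul, mul_apply_eq_comp]

/-- All truncated defect operators of a Beurling tuple are positive: transport to the shift model
and apply `compression_defect_nonneg`. -/
lemma applyDelta_defect_nonneg {n : ℕ} (T : Fin n → H →L[ℂ] H) (hT : IsBeurlingTuple T)
    (j : Fin n) (L : List (Fin n)) (hL : L.Nodup) (hj : j ∉ L) :
    0 ≤ applyDelta T L (1 - adjoint (T j) * T j) := by
  obtain ⟨W₀, hW₀⟩ := exists_szego_dilation T hT.1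
  set W := W₀.toContinuousLinearMap with hW
  have hWW : adjoint W ∘L W = 1 :=
    (ContinuousLinearMap.norm_map_iff_adjoint_comp_self _).1 W₀.norm_map
  have hWW' (x : H) : adjoint W (W x) = x := congrArg (fun X : H →L[ℂ] H => X x) hWW
  have hWT (i : Fin n) : W ∘L adjoint (T i) = star (coordShift H i) ∘L W :=
    ContinuousLinearMap.ext fun h => hW₀ i h
  -- `Φ A = W A W*` is a (non-unital) star homomorphism carrying `T` to the compressed shifts
  let Φ (A : H →L[ℂ] H) := W ∘L A ∘L adjoint W
  have Φmul (A B) : Φ A * Φ B = Φ (A * B) := by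
    ext1 x
    change W (A (adjoint W (W (B (adjoint W x))))) = W (A (B (adjoint W x)))
    rw [hWW']
  have Φstar (A) : star (Φ A) = Φ (star A) := by
    simp only [Φ, star_eq_adjoint, adjoint_comp, adjoint_adjoint, comp_assoc]
  have Φsub (A B) : Φ (A - B) = Φ A - Φ B := by
    simp only [Φ, sub_comp, comp_sub]
  have Φshift (k) : Φ 1 * coordShift H k = Φ (T k) := by
    have h1 : adjoint W ∘L coordShift H k = T k ∘L adjoint W := by
      have := congrArg adjoint (hWT k)
      simpa [adjoint_comp, star_eq_adjoint] using this.symm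
    change W ∘L (adjoint W ∘L coordShift H k) = W ∘L (T k ∘L adjoint W)
    rw [h1]
  have Φdelta (L : List (Fin n)) (A) :
      applyDelta (fun k => Φ (T k)) L (Φ A) = Φ (applyDelta T L A) := by
    induction L with
    | nil => rfl
    | cons q L ih =>
      rw [applyDelta_cons, applyDelta_cons, ih, ← star_eq_adjoint, ← star_eq_adjoint, Φstar, Φmul,
        Φmul, Φsub]
  have Φdefect (k) : Φ 1 - star (Φ (T k)) * Φ (T k) = Φ (1 - adjoint (T k) * T k) := by
    rw [Φstar, Φmul, Φsub, star_eq_adjoint]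
  have key := compression_defect_nonneg (fun k => coordShift H k) (Φ 1)
    (by rw [Φmul, mul_one]) (by rw [Φstar, star_one])
    (fun k => by rw [Φshift, Φmul, mul_one])
    star_coordShift_mul_self coordShift_comm star_coordShift_comm
    (fun i k hik => by
      simp only [Φshift, Φdefect]
      rw [Φmul, hT.2 i k hik]
      simp [Φ]) j L hL hj
  simp only [Φshift, Φdefect, Φdelta] at key
  rw [nonneg_iff_isPositive] at key ⊢
  have h2 := key.adjoint_conj W
  generalize applyDelta T L _ = X at h2 ⊢
  convert h2 using 1
  ext1 x
  change X x = adjoint W (W (X (adjoint W (W x))))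
  rw [hWW', hWW']

/-! ### The truncated defect space as a closed span -/

/-- For a Beurling tuple `T`, `j`, `P ⊆ {1,…,n} \ {j}` and
`P′ = {1,…,n} \ (P ∪ {j})`, the truncated defect space `𝒟_{j,T,P}` equals the closed
linear span of `⋃_{α ∈ ℤ₊^{P′}} T_{P′}^α (𝒟_{j,T})`. -/
theorem beurling_truncDefectSpace_span {n : ℕ} (hn : 0 < n) (T : Fin n → H →L[ℂ] H)
    (hT : IsBeurlingTuple T) (j : Fin n) (P : Finset (Fin n)) (hP : j ∉ P) :
    closure (Set.range ⇑(truncDefectSq T j P)) =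
      closure (↑(Submodule.span ℂ
        (⋃ α : ↥(Finset.univ \ insert j P) → ℕ,
          ⇑(finPow T (extendSupport (Finset.univ \ insert j P) α)) ''
            closure (Set.range ⇑(jointDefectSq T j)))) : Set H) := by
  set Q : Finset (Fin n) := Finset.univ \ insert j P with hQ
  have hmemQ (i : Fin n) : i ∈ Q ↔ i ≠ j ∧ i ∉ P := by simp [hQ]
  have hperm : ((Finset.univ.erase j).sort (· ≤ ·)).Perm
      (Q.sort (· ≤ ·) ++ P.sort (· ≤ ·)) := by
    rw [List.perm_ext_iff_of_nodup (Finset.sort_nodup _ _)]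
    · intro i
      simp only [Finset.mem_sort, Finset.mem_erase, Finset.mem_univ, and_true, List.mem_append,
        hmemQ]
      by_cases hi : i ∈ P
      · simpa [hi] using fun e : i = j => hP (e ▸ hi)
      · simp [hi]
    · refine List.Nodup.append (Finset.sort_nodup _ _) (Finset.sort_nodup _ _) fun i h1 h2 => ?_
      rw [Finset.mem_sort] at h1 h2
      exact ((hmemQ i).1 h1).2 h2
  have hjoint : jointDefectSq T j = applyDelta T (Q.sort (· ≤ ·)) (truncDefectSq T j P) := by
    unfold jointDefectSq truncDefectSq
    rw [applyDelta_perm T hT.1.comm hperm, applyDelta_append]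
  have hF : 0 ≤ jointDefectSq T j :=
    applyDelta_defect_nonneg T hT j _ (Finset.sort_nodup _ _) (by simp)
  have hFs : IsSelfAdjoint (jointDefectSq T j) := hF.isSelfAdjoint
  have hA : IsSelfAdjoint (truncDefectSq T j P) :=
    isSelfAdjoint_applyDelta T _ ((IsSelfAdjoint.one _).sub (IsSelfAdjoint.star_mul_self (T j)))
  set S := Submodule.span ℂ (⋃ α : ↥Q → ℕ, ⇑(finPow T (extendSupport Q α)) ''
    closure (Set.range ⇑(jointDefectSq T j))) with hS
  -- both sides of the equality are closures of subspaces, so it suffices to compare orthogonal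
  -- complements: on the left this is a kernel, on the right an intersection of kernels
  have horth : (truncDefectSq T j P).rangeᗮ = Sᗮ := by
    ext h
    rw [ContinuousLinearMap.orthogonal_range, ← star_eq_adjoint, hA.star_eq]
    change truncDefectSq T j P h = 0 ↔ _
    rw [apply_eq_zero_iff_applyDelta T hT.1.comm hT.1.pure hA (Q.sort (· ≤ ·)) (hjoint ▸ hF),
      ← hjoint]
    have hFker (g : H) : jointDefectSq T j g = 0 ↔
        ∀ y ∈ closure (Set.range ⇑(jointDefectSq T j)), inner ℂ y g = 0 := by
      constructor
      · intro hg y hy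
        have hcl : IsClosed {y : H | inner ℂ y g = 0} :=
          isClosed_eq (by fun_prop) continuous_const
        refine closure_minimal ?_ hcl hy
        rintro _ ⟨x, rfl⟩
        change inner ℂ (jointDefectSq T j x) g = 0
        rw [← adjoint_inner_right, ← star_eq_adjoint, hFs.star_eq, hg, inner_zero_right]
      · intro hg
        have := hg _ (subset_closure ⟨jointDefectSq T j g, rfl⟩)
        rwa [← adjoint_inner_right, ← star_eq_adjoint, hFs.star_eq, inner_self_eq_zero] at this
    rw [hS, Submodule.mem_orthogonal]
    constructor
    · intro hh u hu
      induction hu using Submodule.span_induction with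
      | mem u hu =>
        obtain ⟨α, y, hy, rfl⟩ := Set.mem_iUnion.1 hu
        rw [← adjoint_inner_right]
        refine (hFker _).1 (hh _ fun i hi => ?_) y hy
        rw [Finset.mem_sort] at hi
        simp [extendSupport, hi]
      | zero => exact inner_zero_left _
      | add u v _ _ hu hv => rw [inner_add_left, hu, hv, add_zero]
      | smul c u _ hu => rw [inner_smul_left, hu, mul_zero]
    · intro hh α hα
      rw [hFker]
      intro y hy
      rw [adjoint_inner_right]
      have hext : extendSupport Q (fun i => α i) = α := by
        funext i
        by_cases hi : i ∈ Q
        · simp [extendSupport, hi]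
        · simp [extendSupport, hi, hα i (by simpa using hi)]
      refine hh _ (Submodule.subset_span (Set.mem_iUnion.2 ⟨fun i => α i, y, hy, ?_⟩))
      rw [hext]
  have hcl : (truncDefectSq T j P).range.topologicalClosure = S.topologicalClosure := by
    rw [← Submodule.orthogonal_orthogonal_eq_closure, ← Submodule.orthogonal_orthogonal_eq_closure,
      horth]
  exact congrArg (fun U : Submodule ℂ H => (U : Set H)) hcl
end

section
/- Let T = (T_1, …, T_n) be a Beurling tuple on a complex Hilbert space H and let j ∈ {1, …, n}. Then D_{T_j} = 0 (equivalently T_j* T_j = I, i.e., T_j is an isometry) if and only if D²_{j,T} = 0. -/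
/-!
For a contraction `X` of class `C_{·0}` the map `I - Δ_X` is injective: if `B = X B X*`, then
`B = X^m B X*^m` for all `m`, so `‖B h‖ ≤ ‖B‖ ‖X*^m h‖ → 0` for every `h`. As `D²_{j,T}` arises from
`I - Tⱼ*Tⱼ` by applying such injective linear maps, it vanishes exactly when `I - Tⱼ*Tⱼ` does; the
latter is `D² = D*D`, which vanishes exactly when `D` does.
-/

open ContinuousLinearMap Filter Topology

variable {H : Type*} [NormedAddCommGroup H] [InnerProductSpace ℂ H] [CompleteSpace H]

theorem eq_zero_of_eq_conj {X B : H →L[ℂ] H} (hX : ‖X‖ ≤ 1)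
    (hpure : ∀ h : H, Tendsto (fun m : ℕ => (adjoint X ^ m) h) atTop (𝓝 0))
    (hB : B = X * B * adjoint X) : B = 0 := by
  have hiter : ∀ m : ℕ, B = X ^ m * B * adjoint X ^ m := by
    intro m
    induction m with
    | zero => simp
    | succ m ih =>
      calc B = X ^ m * (X * B * adjoint X) * adjoint X ^ m := by rw [← hB]; exact ih
        _ = X ^ (m + 1) * B * adjoint X ^ (m + 1) := by
          rw [pow_succ X, pow_succ' (adjoint X)]; simp only [mul_assoc]
  ext h
  have hle : ∀ m : ℕ, ‖B h‖ ≤ ‖B‖ * ‖(adjoint X ^ m) h‖ := by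
    intro m
    calc ‖B h‖ = ‖(X ^ m) (B ((adjoint X ^ m) h))‖ := congrArg (fun A : H →L[ℂ] H => ‖A h‖) (hiter m)
      _ ≤ 1 * ‖B ((adjoint X ^ m) h)‖ := by
        refine (X ^ m).le_of_opNorm_le ?_ _
        -- `norm_pow_le` needs `‖1‖ = 1` at exponent `0`, which fails when `H` is trivial.
        rcases Nat.eq_zero_or_pos m with rfl | hm
        · rw [pow_zero]
          exact norm_id_le
        · exact (norm_pow_le' X hm).trans (pow_le_one₀ (norm_nonneg X) hX)
      _ ≤ ‖B‖ * ‖(adjoint X ^ m) h‖ := by rw [one_mul]; exact B.le_opNorm _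
  have hlim : Tendsto (fun m : ℕ => ‖B‖ * ‖(adjoint X ^ m) h‖) atTop (𝓝 0) := by
    simpa using (hpure h).norm.const_mul ‖B‖
  exact norm_le_zero_iff.mp (ge_of_tendsto' hlim hle)

theorem applyDelta_eq_zero_iff {n : ℕ} (T : Fin n → H →L[ℂ] H) (hT : IsSzegoTuple T)
    (L : List (Fin n)) (A : H →L[ℂ] H) : applyDelta T L A = 0 ↔ A = 0 := by
  induction L with
  | nil => rfl
  | cons k L ih =>
    rw [← ih]
    change applyDelta T L A - T k * applyDelta T L A * adjoint (T k) = 0 ↔ _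
    constructor
    · exact fun h => eq_zero_of_eq_conj (hT.contraction k) (hT.pure k) (sub_eq_zero.mp h)
    · intro h
      simp [h]

/-- For a Beurling tuple `T` and `j`, the defect operator
`D_{Tⱼ} = (I − Tⱼ*Tⱼ)^{1/2}` vanishes iff `D²_{j,T} = 0`. -/
theorem beurling_defect_zero_iff_jointDefect_zero {n : ℕ} (hn : 0 < n)
    (T : Fin n → H →L[ℂ] H) (hT : IsBeurlingTuple T) (j : Fin n)
    (D : H →L[ℂ] H) (hDpos : D.IsPositive) (hDsq : D * D = 1 - adjoint (T j) * T j) :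
    D = 0 ↔ jointDefectSq T j = 0 := by
  have hDD : D = 0 ↔ 1 - adjoint (T j) * T j = 0 := by
    have hsa : star D = D := hDpos.isSelfAdjoint
    rw [← hDsq, ← CStarRing.star_mul_self_eq_zero_iff, hsa]
  rw [hDD, jointDefectSq, truncDefectSq, applyDelta_eq_zero_iff T hT.1]
end

section
/- Let T = (T_1, …, T_n) be a Beurling tuple on a complex Hilbert space H and let i, j ∈ {1, …, n} with i ≠ j. Then D_{i,T} D_{j,T} = 0, where D_{i,T} and D_{j,T} are the positive square roots of D²_{i,T} and D²_{j,T} respectively (equivalently, D²_{i,T} D²_{j,T} = 0). -/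
/-!
Purity gives the comparison `D²_{i,T} ≤ I − Tᵢ*Tᵢ`: if `X ≥ T X T*` with `T^{*m} → 0` strongly, then
`⟨Xx, x⟩ ≥ ⟨X T^{*m}x, T^{*m}x⟩ → 0`, so `X ≥ 0` and therefore `X − T X T* ≤ X`
(`nonneg_of_sub_conj_nonneg`); peeling off the factors `I − Δ_{T k}` one at a time yields the
inequality of quadratic forms (`applyDelta_le`). Hence `‖D_{i,T} x‖² ≤ ⟨(I − Tᵢ*Tᵢ)x, x⟩`, so the
kernel of `I − Tᵢ*Tᵢ` lies in that of `D_{i,T}` (`sqrt_jointDefect_apply_eq_zero`). The orthogonality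
`(I − Tᵢ*Tᵢ)(I − Tⱼ*Tⱼ) = 0` thus passes to `D_{i,T}(I − Tⱼ*Tⱼ) = 0`, and, after taking adjoints,
to `D_{j,T} D_{i,T} = 0`.
-/

open ContinuousLinearMap Filter Topology

variable {H : Type*} [NormedAddCommGroup H] [InnerProductSpace ℂ H] [CompleteSpace H]

/-- If `T^{*m} → 0` strongly, a quadratic form that dominates its conjugate by `T` is nonnegative.
No self-adjointness of `X` is needed, as only real parts are considered. -/
lemma nonneg_of_sub_conj_nonneg (T X : H →L[ℂ] H)
    (hT : ∀ h : H, Tendsto (fun m : ℕ => (adjoint T ^ m) h) atTop (𝓝 0))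
    (hX : ∀ x : H, 0 ≤ (inner ℂ ((X - T * X * adjoint T) x) x).re) (x : H) :
    0 ≤ (inner ℂ (X x) x).re := by
  have step : ∀ y : H, (inner ℂ (X (adjoint T y)) (adjoint T y)).re ≤ (inner ℂ (X y) y).re := by
    intro y
    have h := hX y
    simp only [sub_apply, mul_apply_eq_comp, inner_sub_left, Complex.sub_re] at h
    rw [adjoint_inner_right]
    linarith
  have iter : ∀ m : ℕ,
      (inner ℂ (X ((adjoint T ^ m) x)) ((adjoint T ^ m) x)).re ≤ (inner ℂ (X x) x).re := by
    intro m
    induction m with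
    | zero => simp
    | succ m ih =>
      rw [pow_succ', mul_apply_eq_comp]
      exact (step _).trans ih
  have lim : Tendsto (fun m : ℕ => (inner ℂ (X ((adjoint T ^ m) x)) ((adjoint T ^ m) x)).re)
      atTop (𝓝 0) := by
    have hc : Continuous fun y : H => (inner ℂ (X y) y).re := by fun_prop
    have h := (hc.tendsto 0).comp (hT x)
    rwa [map_zero, inner_zero_left, Complex.zero_re] at h
  exact le_of_tendsto' lim iter

lemma applyDelta_le {n : ℕ} (T : Fin n → H →L[ℂ] H)
    (hT : ∀ i (h : H), Tendsto (fun m : ℕ => (adjoint (T i) ^ m) h) atTop (𝓝 0))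
    (A : H →L[ℂ] H) (L : List (Fin n))
    (hL : ∀ x : H, 0 ≤ (inner ℂ (applyDelta T L A x) x).re) (x : H) :
    (inner ℂ (applyDelta T L A x) x).re ≤ (inner ℂ (A x) x).re := by
  induction L generalizing x with
  | nil => exact le_rfl
  | cons k L ih =>
    have hcons : applyDelta T (k :: L) A
        = applyDelta T L A - T k * applyDelta T L A * adjoint (T k) := rfl
    rw [hcons] at hL ⊢
    have hB := nonneg_of_sub_conj_nonneg (T k) _ (hT k) hL
    refine le_trans ?_ (ih hB x)
    have h := hB (adjoint (T k) x)
    rw [adjoint_inner_right] at h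
    simp only [sub_apply, mul_apply_eq_comp, inner_sub_left, Complex.sub_re]
    linarith

lemma sqrt_jointDefect_apply_eq_zero {n : ℕ} (T : Fin n → H →L[ℂ] H)
    (hT : ∀ i (h : H), Tendsto (fun m : ℕ => (adjoint (T i) ^ m) h) atTop (𝓝 0))
    (i : Fin n) (D : H →L[ℂ] H) (hD : adjoint D = D) (hDSq : D * D = jointDefectSq T i)
    (x : H) (hx : (1 - adjoint (T i) * T i) x = 0) : D x = 0 := by
  have key : ∀ y : H, (inner ℂ (jointDefectSq T i y) y).re = ‖D y‖ ^ 2 := by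
    intro y
    rw [← hDSq, mul_apply_eq_comp, ← adjoint_inner_right, hD]
    exact (norm_sq_eq_re_inner (𝕜 := ℂ) (D y)).symm
  have h := applyDelta_le T hT (1 - adjoint (T i) * T i)
    ((Finset.univ.erase i).sort (· ≤ ·))
    (fun y => (sq_nonneg ‖D y‖).trans_eq (key y).symm) x
  rw [hx, inner_zero_left, Complex.zero_re] at h
  have h2 : ‖D x‖ ^ 2 ≤ 0 := (key x).symm.trans_le h
  simpa using h2

/-- For a Beurling tuple `T` and `i ≠ j`, the positive square roots
`D_{i,T}` and `D_{j,T}` of `D²_{i,T}` and `D²_{j,T}` satisfy `D_{i,T} D_{j,T} = 0`. -/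
theorem beurling_jointDefect_orthogonal {n : ℕ} (hn : 0 < n) (T : Fin n → H →L[ℂ] H)
    (hT : IsBeurlingTuple T) (i j : Fin n) (hij : i ≠ j)
    (Di Dj : H →L[ℂ] H) (hDiPos : Di.IsPositive) (hDiSq : Di * Di = jointDefectSq T i)
    (hDjPos : Dj.IsPositive) (hDjSq : Dj * Dj = jointDefectSq T j) :
    Di * Dj = 0 := by
  have hDi : adjoint Di = Di := hDiPos.isSelfAdjoint.adjoint_eq
  have hDj : adjoint Dj = Dj := hDjPos.isSelfAdjoint.adjoint_eq
  have hE : adjoint (1 - adjoint (T j) * T j) = 1 - adjoint (T j) * T j := by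
    simp [← star_eq_adjoint]
  have h1 : Di * (1 - adjoint (T j) * T j) = 0 := by
    ext x
    exact sqrt_jointDefect_apply_eq_zero T hT.1.pure i Di hDi hDiSq _
      (DFunLike.congr_fun (hT.2 i j hij) x)
  have h2 : (1 - adjoint (T j) * T j) * Di = 0 := by
    have h := congrArg star h1
    rwa [star_mul, star_eq_adjoint, star_eq_adjoint, hE, hDi, star_zero] at h
  have h3 : Dj * Di = 0 := by
    ext x
    exact sqrt_jointDefect_apply_eq_zero T hT.1.pure j Dj hDj hDjSq _
      (DFunLike.congr_fun h2 x)
  have h := congrArg star h3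
  rwa [star_mul, star_eq_adjoint, star_eq_adjoint, hDi, hDj, star_zero] at h
end
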